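/- Let (G,c,o) be a recurrent rooted network, h a potential, and {Y_n} the h-process started at a vertex v ∈ S_h={u : h(u)>0}. Then for every M > 0, P^h_v(h(Y_ℓ) > M) → 1 as ℓ → ∞. -/

import Mathlib

open scoped ENNReal
open Filter Topology Classical
noncomputable section

/-- A rooted network: a connected, locally finite simple graph with positive
symmetric edge conductances (extended by `0` to non-edges) and a root `o`. -/
structure RootedNetwork (V : Type*) where
  G : SimpleGraph V
  locallyFinite : ∀ x : V, (G.neighborSet x).Finite
  connected : G.Connected
  c : V → V → ℝ
  c_symm : ∀ x y, c x y = c y x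
  c_pos : ∀ x y, G.Adj x y → 0 < c x y
  c_eq_zero : ∀ x y, ¬ G.Adj x y → c x y = 0
  o : V

namespace RootedNetwork

variable {V : Type*}

/-- The vertex weight `c_x = Σ_{z ∼ x} c_{xz}`. -/
noncomputable def cv (N : RootedNetwork V) (x : V) : ℝ := ∑' y, N.c x y

/-- The transition probability `p(x,y) = c_{xy} / c_x` of the network random walk. -/
noncomputable def p (N : RootedNetwork V) (x y : V) : ℝ≥0∞ :=
  ENNReal.ofReal (N.c x y / N.cv x)

/-- The probability that the network random walk started at `x` begins with the
given finite sequence of steps. -/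
noncomputable def pathProb (N : RootedNetwork V) : V → List V → ℝ≥0∞
  | _, [] => 1
  | x, y :: l => N.p x y * pathProb N y l

/-- The probability, starting from `x`, that the walk ever visits `b`
(`P_x(τ_b < ∞)`), computed by decomposing over the finite path up to the first
visit of `b`. -/
noncomputable def hitProb (N : RootedNetwork V) (x b : V) : ℝ≥0∞ :=
  if x = b then 1
  else ∑' l : {l : List V // l.getLast? = some b ∧ b ∉ l.dropLast}, N.pathProb x l.1

/-- A rooted network is recurrent if the walk started from any vertex almost
surely visits the root `o`. -/
def Recurrent (N : RootedNetwork V) : Prop := ∀ x : V, N.hitProb x N.o = 1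

/-- The Green kernel `G_o(x,y) = Σ_{n ≥ 0} P_x(X_n = y, τ_o > n)` of the walk
killed at the root, computed as a sum over finite paths from `x` to `y`
avoiding `o` (the `n = 0` term is the first summand). -/
noncomputable def GreenKer (N : RootedNetwork V) (x y : V) : ℝ≥0∞ :=
  (if x = y ∧ x ≠ N.o then 1 else 0) +
    ∑' l : {l : List V // l.getLast? = some y ∧ N.o ∉ x :: l}, N.pathProb x l.1

/-- The Green density `g_o(x,y) = G_o(x,y) / c_y`. -/
noncomputable def greenDensity (N : RootedNetwork V) (x y : V) : ℝ≥0∞ :=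
  N.GreenKer x y / ENNReal.ofReal (N.cv y)

/-- The network Laplacian `Δ f (v) = Σ_{x ∼ v} c_{vx} (f(x) - f(v))`. -/
noncomputable def lap (N : RootedNetwork V) (f : V → ℝ) (v : V) : ℝ :=
  ∑' x, N.c v x * (f x - f v)

/-- A potential: a nonnegative function vanishing at `o`, with Laplacian `1`
at `o`, harmonic everywhere else. -/
def IsPotential (N : RootedNetwork V) (h : V → ℝ) : Prop :=
  (∀ v, 0 ≤ h v) ∧ h N.o = 0 ∧ N.lap h N.o = 1 ∧ ∀ v, v ≠ N.o → N.lap h v = 0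

end RootedNetwork
namespace RootedNetwork

variable {V : Type*}

/-- The transition probability `p^h(x,y) = p(x,y) h(y) / h(x)` of the Doob
`h`-process. -/
noncomputable def hp (N : RootedNetwork V) (h : V → ℝ) (x y : V) : ℝ≥0∞ :=
  N.p x y * ENNReal.ofReal (h y / h x)

/-- The probability that the `h`-process started at `x` begins with the given
finite sequence of steps. -/
noncomputable def hPathProb (N : RootedNetwork V) (h : V → ℝ) : V → List V → ℝ≥0∞
  | _, [] => 1
  | x, y :: l => N.hp h x y * hPathProb N h y l

end RootedNetwork
namespace RootedNetwork

/-- `P^h_v(h(Y_ℓ) > M)`: the probability that the `h`-process started at `v`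
satisfies `h(Y_ℓ) > M`, as a sum over length-`ℓ` paths. -/
noncomputable def hLevelProb {V : Type*} (N : RootedNetwork V) (h : V → ℝ)
    (v : V) (ℓ : ℕ) (M : ℝ) : ℝ≥0∞ :=
  ∑' l : {l : List V // l.length = ℓ ∧ M < h ((v :: l).getLast (List.cons_ne_nil v l))},
    N.hPathProb h v l.1

end RootedNetwork

/-!
Let `Q` be the averaging operator of the walk killed at a zero `b` of `h`. Cancelling the ratios
`h(y) / h(x)` along a path, whose weight vanishes if it visits `b`, gives
`h(v) P^h_v(0 < h(Y_n) ≤ M) ≤ M P_v(τ_b > n)`. Since `Q 1 + p(·, b) = 1`, the survival probability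
`P_v(τ_b > n) = Qⁿ 1 (v)` is what is missing from `1` in the first `n` terms of the series
`∑ Qⁱ p(·, b) (v) = P_v(τ_b < ∞)`, so it tends to `0` when `b` is hit almost surely.
The `h`-process never leaves `{h > 0}`, hence `P^h_v(h(Y_n) > M) → 1`.
-/

theorem tsum_list_eq_nil_add_tsum_cons {α : Type*} (F : List α → ℝ≥0∞) :
    ∑' l, F l = F [] + ∑' a, ∑' l, F (a :: l) := by
  let consEquiv : Unit ⊕ α × List α ≃ List α :=
    { toFun := Sum.elim (fun _ => []) fun al => al.1 :: al.2
      invFun := fun l => l.casesOn (.inl ()) fun a l => .inr (a, l)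
      left_inv := by rintro (_ | ⟨a, l⟩) <;> rfl
      right_inv := by rintro (_ | ⟨a, l⟩) <;> rfl }
  rw [← consEquiv.tsum_eq F, Summable.tsum_sum ENNReal.summable ENNReal.summable,
    ENNReal.tsum_prod', tsum_fintype, Fintype.sum_unique]
  rfl

theorem tsum_list_eq_tsum_length {α : Type*} (F : List α → ℝ≥0∞) :
    ∑' l, F l = ∑' n, ∑' l : List α, if l.length = n then F l else 0 := by
  rw [ENNReal.tsum_comm]
  exact tsum_congr fun l => (tsum_ite_eq' l.length fun _ => F l).symm

theorem pow_apply_add_sum_pow_apply {R A : Type*} [Semiring R] [AddCommMonoid A] [Module R A]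
    {T : Module.End R A} {f k : A} (hfk : T f + k = f) (n : ℕ) :
    (T ^ n) f + ∑ i ∈ Finset.range n, (T ^ i) k = f := by
  induction n with
  | zero => simp
  | succ n ih =>
    calc (T ^ (n + 1)) f + ∑ i ∈ Finset.range (n + 1), (T ^ i) k
        = (T ^ n) (T f + k) + ∑ i ∈ Finset.range n, (T ^ i) k := by
          rw [Finset.sum_range_succ, pow_succ, Module.End.mul_apply, map_add]
          abel
      _ = f := by rw [hfk, ih]

theorem tendsto_pow_apply_zero_of_tsum_eq {V : Type*} {T : Module.End ℝ≥0∞ (V → ℝ≥0∞)}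
    {f k : V → ℝ≥0∞} (hfk : T f + k = f) {x : V} (hfx : f x ≠ ∞)
    (hsum : ∑' n, (T ^ n) k x = f x) : Tendsto (fun n => (T ^ n) f x) atTop (𝓝 0) := by
  have remainder (n : ℕ) : f x - ∑ i ∈ Finset.range n, (T ^ i) k x = (T ^ n) f x := by
    have telescope : (T ^ n) f x + ∑ i ∈ Finset.range n, (T ^ i) k x = f x := by
      simpa using congrFun (pow_apply_add_sum_pow_apply hfk n) x
    exact (ENNReal.eq_sub_of_add_eq' hfx telescope).symm
  have partial_sums := ENNReal.tendsto_nat_tsum fun n => (T ^ n) k x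
  rw [hsum] at partial_sums
  simpa only [remainder, tsub_self] using
    ENNReal.Tendsto.sub tendsto_const_nhds partial_sums (.inl hfx)

/-- A matrix of transition weights on `V`. No normalisation is imposed, so that killed walks
are included. -/
abbrev TransitionKernel (V : Type*) := V → V → ℝ≥0∞

namespace TransitionKernel

variable {V : Type*}

/-- The averaging operator `f ↦ (x ↦ E_x[f(X_1)])`. Its `n`-th power sends `f` to
`x ↦ E_x[f(X_n)]`. -/
def avg (P : TransitionKernel V) : Module.End ℝ≥0∞ (V → ℝ≥0∞) where
  toFun f x := ∑' y, P x y * f y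
  map_add' f g := by
    ext x
    simp only [Pi.add_apply, mul_add, ENNReal.tsum_add]
  map_smul' a f := by
    ext x
    simp only [Pi.smul_apply, smul_eq_mul, RingHom.id_apply, mul_left_comm, ENNReal.tsum_mul_left]

/-- The weight of the path that starts at `x` and runs through `l`, times the value of the
terminal reward `f` at its endpoint. -/
def pathWeight (P : TransitionKernel V) (f : V → ℝ≥0∞) : V → List V → ℝ≥0∞
  | x, [] => f x
  | x, y :: l => P x y * pathWeight P f y l

/-- The kernel of the chain killed on entering `b`. Steps out of `b` keep their weight, so it is the
intended chain only for starting points other than `b`. -/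
def killed (P : TransitionKernel V) (b : V) : TransitionKernel V :=
  fun x y => if y = b then 0 else P x y

variable (P : TransitionKernel V) (f : V → ℝ≥0∞)

theorem avg_apply (x : V) : avg P f x = ∑' y, P x y * f y := rfl

theorem avg_pow_succ_apply (n : ℕ) (x : V) :
    (avg P ^ (n + 1)) f x = ∑' y, P x y * (avg P ^ n) f y := by
  rw [pow_succ', Module.End.mul_apply, avg_apply]

theorem avg_pow_mono (n : ℕ) : Monotone (avg P ^ n) := by
  have avg_mono : Monotone (avg P) := fun f g hfg x =>
    ENNReal.tsum_le_tsum fun y => mul_le_mul_right (hfg y) (P x y)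
  rw [Module.End.coe_pow]
  exact avg_mono.iterate n

theorem tsum_pathWeight_of_length (n : ℕ) (x : V) :
    ∑' l : List V, (if l.length = n then pathWeight P f x l else 0) = (avg P ^ n) f x := by
  induction n generalizing x with
  | zero => simp [pathWeight]
  | succ n ih =>
    rw [tsum_list_eq_nil_add_tsum_cons, avg_pow_succ_apply]
    simp [pathWeight, ← ih, ← ENNReal.tsum_mul_left]

theorem tsum_pathWeight (x : V) :
    ∑' l, pathWeight P f x l = ∑' n, (avg P ^ n) f x := by
  simp only [tsum_list_eq_tsum_length (pathWeight P f x), tsum_pathWeight_of_length]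

theorem avg_killed_one_add (b : V) :
    avg (killed P b) 1 + (fun x => P x b) = avg P 1 := by
  ext x
  simp only [Pi.add_apply, avg_apply, Pi.one_apply, mul_one]
  rw [add_comm]
  exact (ENNReal.tsum_eq_add_tsum_ite b).symm

variable {P} in
theorem mul_avg_pow_le {Q : TransitionKernel V} {w : V → ℝ≥0∞}
    (hPQ : ∀ x y, w x * P x y ≤ Q x y * w y) (n : ℕ) (x : V) :
    w x * (avg P ^ n) f x ≤ (avg Q ^ n) (w * f) x := by
  induction n generalizing x with
  | zero => simp
  | succ n ih =>
    rw [avg_pow_succ_apply, avg_pow_succ_apply, ← ENNReal.tsum_mul_left]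
    refine ENNReal.tsum_le_tsum fun y => ?_
    calc w x * (P x y * (avg P ^ n) f y)
        ≤ Q x y * w y * (avg P ^ n) f y := by
          rw [← mul_assoc]
          exact mul_le_mul_left (hPQ x y) _
      _ ≤ Q x y * (avg Q ^ n) (w * f) y := by
          rw [mul_assoc]
          gcongr
          exact ih y

end TransitionKernel

namespace RootedNetwork

open TransitionKernel

variable {V : Type*} (N : RootedNetwork V)

theorem c_nonneg (x y : V) : 0 ≤ N.c x y := by
  by_cases hxy : N.G.Adj x y
  · exact (N.c_pos x y hxy).le
  · exact (N.c_eq_zero x y hxy).ge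

theorem summable_c_mul (x : V) (f : V → ℝ) : Summable fun y => N.c x y * f y := by
  refine summable_of_hasFiniteSupport ((N.locallyFinite x).subset fun y hy => ?_)
  by_contra hxy
  exact hy (by simp [N.c_eq_zero x y hxy])

theorem summable_c (x : V) : Summable (N.c x) := by
  simpa using N.summable_c_mul x 1

theorem cv_pos [Nontrivial V] (x : V) : 0 < N.cv x := by
  obtain ⟨y, hxy⟩ := N.connected.preconnected.exists_adj_of_nontrivial x
  exact (N.summable_c x).tsum_pos (N.c_nonneg x) y (N.c_pos x y hxy)

theorem avg_p_one [Nontrivial V] : avg N.p 1 = 1 := by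
  ext x
  simp only [avg_apply, Pi.one_apply, mul_one, p]
  rw [← ENNReal.ofReal_tsum_of_nonneg (fun y => div_nonneg (N.c_nonneg x y) (N.cv_pos x).le)
    ((N.summable_c x).div_const _), tsum_div_const, ← cv, div_self (N.cv_pos x).ne',
    ENNReal.ofReal_one]

theorem tsum_c_mul_of_lap_eq_zero {f : V → ℝ} {x : V} (hf : N.lap f x = 0) :
    ∑' y, N.c x y * f y = N.cv x * f x := by
  simp only [lap, mul_sub] at hf
  rwa [(N.summable_c_mul x f).tsum_sub (N.summable_c_mul x fun _ => f x), tsum_mul_right,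
    sub_eq_zero] at hf

theorem tsum_hp_eq_one [Nontrivial V] {h : V → ℝ} (h_nonneg : ∀ x, 0 ≤ h x) {x : V} (hx : 0 < h x)
    (h_harm : N.lap h x = 0) : ∑' y, N.hp h x y = 1 := by
  have weight_pos : 0 < N.cv x * h x := mul_pos (N.cv_pos x) hx
  have hp_eq (y : V) : N.hp h x y = ENNReal.ofReal (N.c x y * h y / (N.cv x * h x)) := by
    rw [hp, p, ← ENNReal.ofReal_mul (div_nonneg (N.c_nonneg x y) (N.cv_pos x).le),
      div_mul_div_comm]
  simp only [hp_eq]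
  rw [← ENNReal.ofReal_tsum_of_nonneg
      (fun y => div_nonneg (mul_nonneg (N.c_nonneg x y) (h_nonneg y)) weight_pos.le)
      ((N.summable_c_mul x h).div_const _), tsum_div_const, N.tsum_c_mul_of_lap_eq_zero h_harm,
    div_self weight_pos.ne', ENNReal.ofReal_one]

theorem avg_hp_indicator_pos [Nontrivial V] {h : V → ℝ} (h_nonneg : ∀ x, 0 ≤ h x)
    (h_harm : ∀ x, 0 < h x → N.lap h x = 0) :
    avg (N.hp h) ((h ⁻¹' Set.Ioi 0).indicator 1) = (h ⁻¹' Set.Ioi 0).indicator 1 := by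
  ext x
  have hp_mul_indicator (y : V) : N.hp h x y * (h ⁻¹' Set.Ioi 0).indicator 1 y = N.hp h x y := by
    rcases le_or_gt (h y) 0 with hy | hy
    · simp [hp, ENNReal.ofReal_of_nonpos, div_nonpos_of_nonpos_of_nonneg hy (h_nonneg x)]
    · simp [hy]
  simp only [avg_apply, hp_mul_indicator]
  rcases (h_nonneg x).eq_or_lt with hx | hx
  · simp [hp, ← hx]
  · simp [N.tsum_hp_eq_one h_nonneg hx (h_harm x hx), hx]

theorem ofReal_mul_hp_le {h : V → ℝ} {b : V} (h_zero : h b = 0) (x y : V) :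
    ENNReal.ofReal (h x) * N.hp h x y ≤ killed N.p b x y * ENNReal.ofReal (h y) := by
  rcases le_or_gt (h x) 0 with hx | hx
  · simp [ENNReal.ofReal_of_nonpos hx]
  rcases eq_or_ne y b with rfl | hy
  · simp [hp, h_zero]
  · rw [hp, mul_left_comm, ← ENNReal.ofReal_mul hx.le, mul_div_cancel₀ _ hx.ne', killed,
      if_neg hy]

theorem pathWeight_killed_p (b x : V) (l : List V) :
    pathWeight (killed N.p b) (fun y => N.p y b) x l =
      if b ∉ l then N.pathProb x (l ++ [b]) else 0 := by
  induction l generalizing x with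
  | nil => simp [pathWeight, pathProb]
  | cons y l ih =>
    rcases eq_or_ne y b with rfl | hy
    · simp [pathWeight, killed]
    · simp [pathWeight, killed, pathProb, ih, hy, hy.symm]

theorem hitProb_eq_tsum {x b : V} (hx : x ≠ b) :
    N.hitProb x b = ∑' n, (avg (killed N.p b) ^ n) (fun y => N.p y b) x := by
  let firstHits : Set (List V) := {l | l.getLast? = some b ∧ b ∉ l.dropLast}
  have support_subset :
      Function.support (firstHits.indicator (N.pathProb x)) ⊆ Set.range (· ++ [b]) :=
    fun l hl => ⟨l.dropLast, List.dropLast_append_getLast? _ (Set.mem_of_indicator_ne_zero hl).1⟩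
  calc N.hitProb x b
      = ∑' l, firstHits.indicator (N.pathProb x) l := by
        rw [hitProb, if_neg hx, ← tsum_subtype]
        rfl
    _ = ∑' l : List V, firstHits.indicator (N.pathProb x) (l ++ [b]) :=
        ((List.append_left_injective [b]).tsum_eq support_subset).symm
    _ = ∑' l, pathWeight (killed N.p b) (fun y => N.p y b) x l := by
        simp [pathWeight_killed_p, firstHits, Set.indicator_apply]
    _ = ∑' n, (avg (killed N.p b) ^ n) (fun y => N.p y b) x := tsum_pathWeight _ _ x

theorem tendsto_survival_zero {x b : V} (hx : x ≠ b) (hhit : N.hitProb x b = 1) :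
    Tendsto (fun n => (avg (killed N.p b) ^ n) 1 x) atTop (𝓝 0) := by
  have : Nontrivial V := ⟨x, b, hx⟩
  refine tendsto_pow_apply_zero_of_tsum_eq ((avg_killed_one_add N.p b).trans N.avg_p_one)
    ENNReal.one_ne_top ?_
  rw [← N.hitProb_eq_tsum hx, hhit, Pi.one_apply]

theorem pathWeight_hp_indicator (h : V → ℝ) (s : Set V) (x : V) (l : List V) :
    pathWeight (N.hp h) (s.indicator 1) x l =
      if (x :: l).getLast (List.cons_ne_nil x l) ∈ s then N.hPathProb h x l else 0 := by
  induction l generalizing x with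
  | nil => rfl
  | cons y l ih => simp [pathWeight, hPathProb, ih]

theorem hLevelProb_eq_avg_pow (h : V → ℝ) (x : V) (n : ℕ) (M : ℝ) :
    N.hLevelProb h x n M = (avg (N.hp h) ^ n) ((h ⁻¹' Set.Ioi M).indicator 1) x := by
  rw [← tsum_pathWeight_of_length, hLevelProb]
  refine (tsum_subtype {l : List V | l.length = n ∧
    M < h ((x :: l).getLast (List.cons_ne_nil x l))} (N.hPathProb h x)).trans ?_
  simp only [pathWeight_hp_indicator, Set.indicator_apply, Set.mem_ofPred_eq, ite_and,
    Set.mem_preimage, Set.mem_Ioi]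

theorem hLevelProb_add_avg_pow [Nontrivial V] {h : V → ℝ} (h_nonneg : ∀ x, 0 ≤ h x)
    (h_harm : ∀ x, 0 < h x → N.lap h x = 0) {x : V} (hx : 0 < h x) {M : ℝ} (hM : 0 ≤ M) (n : ℕ) :
    N.hLevelProb h x n M + (avg (N.hp h) ^ n) ((h ⁻¹' Set.Ioc 0 M).indicator 1) x = 1 := by
  have split_levels :
      ((h ⁻¹' Set.Ioi M).indicator 1 + (h ⁻¹' Set.Ioc 0 M).indicator 1 : V → ℝ≥0∞) =
        (h ⁻¹' Set.Ioi 0).indicator 1 := by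
    rw [← Set.Ioc_union_Ioi_eq_Ioi hM, Set.preimage_union, add_comm]
    have disjoint_levels : Disjoint (h ⁻¹' Set.Ioc 0 M) (h ⁻¹' Set.Ioi M) :=
      (Set.Ioc_disjoint_Ioi le_rfl).preimage h
    exact (Set.indicator_union_of_disjoint disjoint_levels (1 : V → ℝ≥0∞)).symm
  have invariant :
      (avg (N.hp h) ^ n) ((h ⁻¹' Set.Ioi 0).indicator 1) = (h ⁻¹' Set.Ioi 0).indicator 1 := by
    rw [Module.End.pow_apply]
    exact Function.iterate_fixed (N.avg_hp_indicator_pos h_nonneg h_harm) n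
  rw [hLevelProb_eq_avg_pow, ← Pi.add_apply, ← map_add, split_levels, invariant,
    Set.indicator_of_mem (s := h ⁻¹' Set.Ioi 0) hx, Pi.one_apply]

theorem ofReal_mul_avg_pow_hp_le {h : V → ℝ} {b : V} (h_zero : h b = 0) (M : ℝ) (n : ℕ) (x : V) :
    ENNReal.ofReal (h x) * (avg (N.hp h) ^ n) ((h ⁻¹' Set.Ioc 0 M).indicator 1) x ≤
      ENNReal.ofReal M * (avg (killed N.p b) ^ n) 1 x := by
  have reward_le : (fun y => ENNReal.ofReal (h y)) * (h ⁻¹' Set.Ioc 0 M).indicator 1 ≤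
      ENNReal.ofReal M • (1 : V → ℝ≥0∞) := by
    intro y
    by_cases hy : h y ∈ Set.Ioc 0 M
    · simpa [hy.1, hy.2] using ENNReal.ofReal_le_ofReal hy.2
    · simp [Set.indicator_of_notMem (show y ∉ h ⁻¹' Set.Ioc 0 M from hy)]
  calc ENNReal.ofReal (h x) * (avg (N.hp h) ^ n) ((h ⁻¹' Set.Ioc 0 M).indicator 1) x
      ≤ (avg (killed N.p b) ^ n)
          ((fun y => ENNReal.ofReal (h y)) * (h ⁻¹' Set.Ioc 0 M).indicator 1) x :=
        mul_avg_pow_le (w := fun y => ENNReal.ofReal (h y)) _ (N.ofReal_mul_hp_le h_zero) n x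
    _ ≤ (avg (killed N.p b) ^ n) (ENNReal.ofReal M • (1 : V → ℝ≥0∞)) x :=
        avg_pow_mono _ n reward_le x
    _ = ENNReal.ofReal M * (avg (killed N.p b) ^ n) 1 x := by
        rw [map_smul, Pi.smul_apply, smul_eq_mul]

theorem tendsto_avg_pow_hp_Ioc_zero {h : V → ℝ} {b : V} (h_zero : h b = 0) {x : V}
    (hx : 0 < h x) (hhit : N.hitProb x b = 1) (M : ℝ) :
    Tendsto (fun n => (avg (N.hp h) ^ n) ((h ⁻¹' Set.Ioc 0 M).indicator 1) x) atTop (𝓝 0) := by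
  have hxb : x ≠ b := by
    rintro rfl
    exact hx.ne' h_zero
  have hx_ne : ENNReal.ofReal (h x) ≠ 0 := (ENNReal.ofReal_pos.2 hx).ne'
  have bound_tendsto : Tendsto (fun n => ENNReal.ofReal M * (avg (killed N.p b) ^ n) 1 x /
      ENNReal.ofReal (h x)) atTop (𝓝 0) := by
    simpa using ENNReal.Tendsto.div_const (ENNReal.Tendsto.const_mul
      (N.tendsto_survival_zero hxb hhit) (.inr (ENNReal.ofReal_ne_top (r := M)))) (.inr hx_ne)
  refine tendsto_of_tendsto_of_tendsto_of_le_of_le tendsto_const_nhds bound_tendsto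
    (fun n => zero_le) fun n => ?_
  rw [ENNReal.le_div_iff_mul_le (.inl hx_ne) (.inl ENNReal.ofReal_ne_top), mul_comm]
  exact N.ofReal_mul_avg_pow_hp_le h_zero M n x

end RootedNetwork

theorem hLevelProb_tendsto_one_general {V : Type*} (N : RootedNetwork V) {h : V → ℝ}
    (h_nonneg : ∀ x, 0 ≤ h x) (h_harm : ∀ x, 0 < h x → N.lap h x = 0)
    {v b : V} (hv : 0 < h v) (h_zero : h b = 0) (hhit : N.hitProb v b = 1) {M : ℝ} (hM : 0 ≤ M) :
    Tendsto (fun ℓ : ℕ => N.hLevelProb h v ℓ M) atTop (𝓝 (1 : ℝ≥0∞)) := by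
  have : Nontrivial V := ⟨v, b, fun hvb => hv.ne' (hvb ▸ h_zero)⟩
  have low_tendsto := N.tendsto_avg_pow_hp_Ioc_zero h_zero hv hhit M
  have one_sub_tendsto := ENNReal.Tendsto.sub
    (tendsto_const_nhds (x := (1 : ℝ≥0∞))) low_tendsto (.inl ENNReal.one_ne_top)
  rw [tsub_zero] at one_sub_tendsto
  refine one_sub_tendsto.congr fun n => ?_
  exact (ENNReal.eq_sub_of_add_eq' ENNReal.one_ne_top
    (N.hLevelProb_add_avg_pow h_nonneg h_harm hv hM n)).symm

/-- For a potential `h` on a recurrent rooted network and the `h`-process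
`{Y_n}` started at `v ∈ S_h`, one has `P^h_v(h(Y_ℓ) > M) → 1` as `ℓ → ∞`, for
every `M > 0`. -/
theorem hLevelProb_tendsto_one {V : Type*} (N : RootedNetwork V)
    (hrec : N.Recurrent) (h : V → ℝ) (hpot : N.IsPotential h)
    (v : V) (hv : 0 < h v) (M : ℝ) (hM : 0 < M) :
    Tendsto (fun ℓ : ℕ => N.hLevelProb h v ℓ M) atTop (𝓝 (1 : ℝ≥0∞)) := by
  exact hLevelProb_tendsto_one_general N hpot.1
    (fun x hx => hpot.2.2.2 x fun hxo => hx.ne' (hxo ▸ hpot.2.1)) hv hpot.2.1 (hrec v) hM.le
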